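/- Let B⁰ = ∪_{n ∈ ℤ} {(n,k) : k = 0, 1, …, 2^{|n|}} ⊂ ℍ. Then H_{B⁰}(x) = 0 for every x ∈ B⁰. -/

import Mathlib

open Filter

namespace SHM

/-- The upper half planar lattice `ℍ = {(x₁,x₂) ∈ ℤ² : x₂ ≥ 0}` (including the x-axis). -/
def upperH : Set (ℤ × ℤ) := {p | 0 ≤ p.2}

/-- The horizontal line `L_n = {(x,n) : x ∈ ℤ}` of height `n`. -/
def lineH (n : ℤ) : Set (ℤ × ℤ) := {p | p.2 = n}

/-- The four unit steps of the planar simple random walk. -/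
def dirs : Finset (ℤ × ℤ) := {(1,0), (-1,0), (0,1), (0,-1)}

/-- The position after `m` steps of the walk started at `z` whose first `n`
increments are given by `σ`. -/
def pos (z : ℤ × ℤ) {n : ℕ} (σ : Fin n → ℤ × ℤ) (m : ℕ) : ℤ × ℤ :=
  z + ∑ i ∈ Finset.univ.filter (fun i : Fin n => (i : ℕ) < m), σ i

/-- The probability that the first `n` increments of the simple random walk
(each uniform on the four unit vectors) satisfy the predicate `E`. -/
noncomputable def stepProb (n : ℕ) (E : (Fin n → ℤ × ℤ) → Prop) : ℝ :=
  (Nat.card {σ : Fin n → ↥dirs // E fun i => ((σ i : ℤ × ℤ))} : ℝ) / 4 ^ n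

/-- `P_z(S_{τ̄_A} = x)` : the walk started at `z` hits `A` (in finite time) for the
first time precisely at the point `x`.  Here `τ̄_A = min {m ≥ 0 : S_m ∈ A}`. -/
noncomputable def hitProb (z : ℤ × ℤ) (A : Set (ℤ × ℤ)) (x : ℤ × ℤ) : ℝ :=
  ∑' n : ℕ, stepProb n fun σ =>
    pos z σ n = x ∧ x ∈ A ∧ ∀ m < n, pos z σ m ∉ A

/-- `P_z(τ̄_A < τ̄_B)` : the walk started at `z` hits `A` strictly before hitting `B`. -/
noncomputable def hitBeforeProb (z : ℤ × ℤ) (A B : Set (ℤ × ℤ)) : ℝ :=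
  ∑' n : ℕ, stepProb n fun σ =>
    pos z σ n ∈ A ∧ pos z σ n ∉ B ∧ ∀ m < n, pos z σ m ∉ A ∧ pos z σ m ∉ B

/-- The stationary harmonic measure `H_{B,N}(x) = Σ_{z ∈ L_N \ B} P_z(S_{τ̄_{B ∪ L₀}} = x)`. -/
noncomputable def harm (B : Set (ℤ × ℤ)) (N : ℕ) (x : ℤ × ℤ) : ℝ :=
  ∑' z : ↥(lineH (N : ℤ) \ B), hitProb (z : ℤ × ℤ) (B ∪ lineH 0) x

/-- The set `B⁰ = ∪_{n ∈ ℤ} {(n,k) : k = 0, 1, …, 2^{|n|}}`. -/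
def Bzero : Set (ℤ × ℤ) := {p | 0 ≤ p.2 ∧ p.2 ≤ 2 ^ p.1.natAbs}

/-!
Reciprocal pronic numbers `a t = 1 / (t (t + 1))` have nonnegative fourth central differences, so
`(n, t) ↦ a t - n² / 2 * δ²a t`, the first two terms of the discrete harmonic extension of `a`
that is even in `n`, is superharmonic for `t > 2`; moreover it is at most `a t`, and positive where
`2 |n| ≤ t`. If the walk can avoid `B` in `ℍ` only inside a cone `2 |n| ≤ k + c`, the maximum
principle for a vertical translate of this function bounds the probability of hitting `x` from
height `N` by `O(N⁻²)`. As only `O(N)` starting points lie in the cone, the sum over them tends to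
zero.
-/

section FirstStep

variable {n : ℕ} {z x : ℤ × ℤ} {A : Set (ℤ × ℤ)}

lemma sum_dirs (f : ℤ × ℤ → ℝ) :
    ∑ d ∈ dirs, f d = f (1, 0) + f (-1, 0) + f (0, 1) + f (0, -1) := by
  simp [dirs]
  ring

lemma card_dirs : dirs.card = 4 := by decide

/-- The mean `E_z[h(S₁)]` of `h` after one step of the walk started at `z`. -/
noncomputable def stepMean (h : ℤ × ℤ → ℝ) (z : ℤ × ℤ) : ℝ :=
  (∑ d ∈ dirs, h (z + d)) / 4

lemma stepProb_nonneg (n : ℕ) (E : (Fin n → ℤ × ℤ) → Prop) : 0 ≤ stepProb n E := by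
  unfold stepProb
  positivity

lemma stepProb_le_one (n : ℕ) (E : (Fin n → ℤ × ℤ) → Prop) : stepProb n E ≤ 1 := by
  have hcard : Nat.card {σ : Fin n → dirs // E fun i => σ i} ≤ 4 ^ n := by
    simpa [Nat.card_eq_fintype_card, card_dirs] using
      Finite.card_subtype_le (fun σ : Fin n → dirs => E fun i => σ i)
  exact div_le_one_of_le₀ (mod_cast hcard) (by positivity)

lemma stepProb_eq_zero {E : (Fin n → ℤ × ℤ) → Prop} (hE : ∀ σ, ¬ E σ) : stepProb n E = 0 := by
  simp [stepProb, hE]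

lemma stepProb_succ (n : ℕ) (E : (Fin (n + 1) → ℤ × ℤ) → Prop) :
    stepProb (n + 1) E = (∑ d ∈ dirs, stepProb n fun τ => E (Fin.cons d τ)) / 4 := by
  have head_tail : {σ : Fin (n + 1) → dirs // E fun i => σ i} ≃
      Σ d : dirs, {τ : Fin n → dirs // E (Fin.cons (d : ℤ × ℤ) fun i => (τ i : ℤ × ℤ))} :=
    ((Fin.consEquiv fun _ => dirs).symm.subtypeEquiv fun σ => by
      rw [← Fin.cons_self_tail σ]
      exact iff_of_eq (congrArg E (Fin.comp_cons Subtype.val (σ 0) (Fin.tail σ)))).trans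
    (Equiv.subtypeProdEquivSigmaSubtype fun (d : dirs) (τ : Fin n → dirs) =>
      E (Fin.cons (d : ℤ × ℤ) fun i => (τ i : ℤ × ℤ)))
  rw [← Finset.sum_coe_sort]
  simp only [stepProb]
  rw [Nat.card_congr head_tail, Nat.card_sigma, Nat.cast_sum, ← Finset.sum_div, div_div, pow_succ]

lemma pos_zero (z : ℤ × ℤ) (σ : Fin n → ℤ × ℤ) : pos z σ 0 = z := by
  simp [pos]

lemma pos_cons_succ (z d : ℤ × ℤ) (τ : Fin n → ℤ × ℤ) (m : ℕ) :
    pos z (Fin.cons d τ : Fin (n + 1) → ℤ × ℤ) (m + 1) = pos (z + d) τ m := by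
  simp [pos, Finset.sum_filter, Fin.sum_univ_succ, add_assoc]

/-- `P_z(τ̄_A = n, S_n = x)`: the `n`-th term of the series `hitProb z A x`. -/
noncomputable def hitProbAt (n : ℕ) (z : ℤ × ℤ) (A : Set (ℤ × ℤ)) (x : ℤ × ℤ) : ℝ :=
  stepProb n fun σ => pos z σ n = x ∧ x ∈ A ∧ ∀ m < n, pos z σ m ∉ A

lemma hitProb_eq_tsum (z : ℤ × ℤ) (A : Set (ℤ × ℤ)) (x : ℤ × ℤ) :
    hitProb z A x = ∑' n, hitProbAt n z A x :=
  rfl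

lemma hitProbAt_nonneg (n : ℕ) (z : ℤ × ℤ) (A : Set (ℤ × ℤ)) (x : ℤ × ℤ) :
    0 ≤ hitProbAt n z A x :=
  stepProb_nonneg _ _

lemma hitProb_nonneg (z : ℤ × ℤ) (A : Set (ℤ × ℤ)) (x : ℤ × ℤ) : 0 ≤ hitProb z A x :=
  tsum_nonneg fun n => hitProbAt_nonneg n z A x

lemma hitProbAt_zero_of_ne (hzx : z ≠ x) : hitProbAt 0 z A x = 0 :=
  stepProb_eq_zero fun σ hσ => hzx (pos_zero z σ ▸ hσ.1)

lemma hitProbAt_zero_of_notMem (hz : z ∉ A) : hitProbAt 0 z A x = 0 :=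
  stepProb_eq_zero fun σ hσ => hz (pos_zero z σ ▸ hσ.1 ▸ hσ.2.1)

lemma hitProbAt_succ_of_mem (hz : z ∈ A) : hitProbAt (n + 1) z A x = 0 :=
  stepProb_eq_zero fun σ hσ => hσ.2.2 0 n.succ_pos ((pos_zero z σ).symm ▸ hz)

lemma hitProbAt_succ_of_notMem (hz : z ∉ A) :
    hitProbAt (n + 1) z A x = stepMean (fun w => hitProbAt n w A x) z := by
  simp only [hitProbAt, stepMean, stepProb_succ, Nat.forall_lt_succ_left, pos_zero, pos_cons_succ,
    hz, not_false_eq_true, true_and]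

lemma sum_hitProbAt_mul_le {U : Set (ℤ × ℤ)} {h : ℤ × ℤ → ℝ} (h_nonneg : ∀ z ∈ U, 0 ≤ h z)
    (h_closed : ∀ z ∈ U \ A, ∀ d ∈ dirs, z + d ∈ U) (h_super : ∀ z ∈ U \ A, stepMean h z ≤ h z)
    (x : ℤ × ℤ) (M : ℕ) : ∀ z ∈ U, (∑ n ∈ Finset.range M, hitProbAt n z A x) * h x ≤ h z := by
  induction M with
  | zero => simpa using h_nonneg
  | succ M ih =>
    intro z hz
    rw [Finset.sum_range_succ']
    by_cases hzA : z ∈ A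
    · rw [Finset.sum_eq_zero fun n _ => hitProbAt_succ_of_mem hzA, zero_add]
      by_cases hzx : z = x
      · subst hzx
        exact mul_le_of_le_one_left (h_nonneg z hz) (stepProb_le_one _ _)
      · simpa [hitProbAt_zero_of_ne hzx] using h_nonneg z hz
    · calc (∑ n ∈ Finset.range M, hitProbAt (n + 1) z A x + hitProbAt 0 z A x) * h x
          = stepMean (fun w => (∑ n ∈ Finset.range M, hitProbAt n w A x) * h x) z := by
            simp only [hitProbAt_succ_of_notMem hzA, hitProbAt_zero_of_notMem hzA, add_zero,
              stepMean, ← Finset.sum_div, ← Finset.sum_mul]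
            rw [Finset.sum_comm, div_mul_eq_mul_div]
        _ ≤ stepMean h z := by
            unfold stepMean
            gcongr with d hd
            exact ih _ (h_closed z ⟨hz, hzA⟩ d hd)
        _ ≤ h z := h_super z ⟨hz, hzA⟩

theorem hitProb_mul_le_of_superharmonic {U : Set (ℤ × ℤ)} {h : ℤ × ℤ → ℝ}
    (h_nonneg : ∀ z ∈ U, 0 ≤ h z) (h_closed : ∀ z ∈ U \ A, ∀ d ∈ dirs, z + d ∈ U)
    (h_super : ∀ z ∈ U \ A, stepMean h z ≤ h z) (x : ℤ × ℤ) (hz : z ∈ U) :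
    hitProb z A x * h x ≤ h z := by
  rcases le_or_gt (h x) 0 with hx | hx
  · exact (mul_nonpos_of_nonneg_of_nonpos (hitProb_nonneg z A x) hx).trans (h_nonneg z hz)
  · rw [← le_div_iff₀ hx, hitProb_eq_tsum]
    refine Real.tsum_le_of_sum_range_le (fun n => hitProbAt_nonneg n z A x) fun M => ?_
    rw [le_div_iff₀ hx]
    exact sum_hitProbAt_mul_le h_nonneg h_closed h_super x M z hz

end FirstStep

section ConePotential

/-- The second central difference `δ²a` of a sequence. -/
def centralDiffTwo (a : ℤ → ℝ) (t : ℤ) : ℝ :=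
  a (t + 1) + a (t - 1) - 2 * a t

/-- The extension `(n, t) ↦ a t - n² / 2 * δ²a t` of a sequence on the vertical axis to the plane,
which is harmonic up to a fourth difference of `a`. -/
noncomputable def quadraticExtension (a : ℤ → ℝ) (z : ℤ × ℤ) : ℝ :=
  a z.2 - (z.1 : ℝ) ^ 2 / 2 * centralDiffTwo a z.2

lemma stepMean_quadraticExtension (a : ℤ → ℝ) (z : ℤ × ℤ) :
    stepMean (quadraticExtension a) z = quadraticExtension a z -
      (z.1 : ℝ) ^ 2 / 8 * centralDiffTwo (centralDiffTwo a) z.2 := by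
  rw [stepMean, sum_dirs fun d => quadraticExtension a (z + d)]
  simp only [quadraticExtension, Prod.fst_add, Prod.snd_add, add_zero, ← sub_eq_add_neg]
  rw [centralDiffTwo.eq_def (centralDiffTwo a), centralDiffTwo.eq_def a z.2]
  push_cast
  ring

/-- The reciprocal pronic numbers `1 / (t (t + 1))`, set to `0` at `t = 0` and `t = -1`. -/
noncomputable def pronicInv (t : ℤ) : ℝ :=
  1 / ((t : ℝ) * (t + 1))

lemma centralDiffTwo_pronicInv {t : ℤ} (ht : 1 < t) :
    centralDiffTwo pronicInv t = 6 / (((t : ℝ) - 1) * t * (t + 1) * (t + 2)) := by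
  have ht' : (1 : ℝ) < t := mod_cast ht
  have h_pred : (t : ℝ) - 1 ≠ 0 := by linarith
  have h_succ : (t : ℝ) + 1 + 1 ≠ 0 := by linarith
  simp only [centralDiffTwo, pronicInv]
  push_cast
  rw [sub_add_cancel, show (t : ℝ) + 2 = t + 1 + 1 by ring]
  field_simp
  ring

lemma centralDiffTwo_centralDiffTwo_pronicInv_nonneg {t : ℤ} (ht : 2 < t) :
    0 ≤ centralDiffTwo (centralDiffTwo pronicInv) t := by
  obtain ⟨s, rfl⟩ : ∃ s, t = s + 2 := ⟨t - 2, by ring⟩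
  have hs : (0 : ℝ) < s := by exact_mod_cast (by omega : 0 < s)
  have h_fourth : centralDiffTwo (centralDiffTwo pronicInv) (s + 2) =
      120 / ((s : ℝ) * (s + 1) * (s + 2) * (s + 3) * (s + 4) * (s + 5)) := by
    rw [centralDiffTwo, centralDiffTwo_pronicInv (by omega), centralDiffTwo_pronicInv (by omega),
      centralDiffTwo_pronicInv (by omega)]
    push_cast
    -- `ring_nf` merges the shifts in each factor, so that `field_simp` recognizes it as positive.
    ring_nf
    field_simp
    ring
  rw [h_fourth]
  positivity

/-- The barrier function of the cone: the quadratic extension of the reciprocal pronic numbers,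
moved down by `K` so that its poles lie below the region where it is used. -/
noncomputable def conePotential (K : ℤ) (z : ℤ × ℤ) : ℝ :=
  quadraticExtension pronicInv (z + (0, K))

variable {K : ℤ} {z : ℤ × ℤ}

lemma stepMean_conePotential_le (hz : 2 < z.2 + K) :
    stepMean (conePotential K) z ≤ conePotential K z := by
  have h_shift : stepMean (conePotential K) z =
      stepMean (quadraticExtension pronicInv) (z + (0, K)) := by
    simp only [stepMean, conePotential, add_right_comm]
  have h_fourth : 0 ≤ centralDiffTwo (centralDiffTwo pronicInv) (z + (0, K)).2 :=
    centralDiffTwo_centralDiffTwo_pronicInv_nonneg hz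
  rw [h_shift, stepMean_quadraticExtension, conePotential]
  exact sub_le_self _ (by positivity)

lemma conePotential_le_pronicInv (hz : 1 < z.2 + K) : conePotential K z ≤ pronicInv (z.2 + K) := by
  have hz' : (1 : ℝ) < (z.2 + K : ℤ) := mod_cast hz
  have : (0 : ℝ) < (z.2 + K : ℤ) - 1 := by linarith
  have h_diff : 0 ≤ centralDiffTwo pronicInv (z.2 + K) := by
    rw [centralDiffTwo_pronicInv hz]
    positivity
  exact sub_le_self _ (mul_nonneg (by positivity) h_diff)

lemma conePotential_pos (hz : 1 < z.2 + K) (hcone : 2 * |z.1| ≤ z.2 + K) :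
    0 < conePotential K z := by
  have h_eq : conePotential K z =
      pronicInv (z.2 + K) - (z.1 : ℝ) ^ 2 / 2 * centralDiffTwo pronicInv (z.2 + K) := by
    simp [conePotential, quadraticExtension]
  rw [h_eq, centralDiffTwo_pronicInv hz, pronicInv]
  generalize z.2 + K = t at hz hcone
  have ht : (1 : ℝ) < t := mod_cast hz
  have h_abs : 2 * |(z.1 : ℝ)| ≤ t := mod_cast hcone
  have h_pred : (0 : ℝ) < t - 1 := by linarith
  have h_sq : 4 * (z.1 : ℝ) ^ 2 ≤ t ^ 2 := by
    rw [← sq_abs (z.1 : ℝ)]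
    nlinarith [abs_nonneg (z.1 : ℝ)]
  have ht_two : (2 : ℝ) ≤ t := mod_cast hz
  have h_num : 0 < ((t : ℝ) - 1) * (t + 2) - 3 * (z.1 : ℝ) ^ 2 := by nlinarith
  have h_frac : 1 / ((t : ℝ) * (t + 1)) -
      (z.1 : ℝ) ^ 2 / 2 * (6 / ((t - 1) * t * (t + 1) * (t + 2))) =
      ((t - 1) * (t + 2) - 3 * (z.1 : ℝ) ^ 2) / ((t - 1) * t * (t + 1) * (t + 2)) := by
    field_simp
    ring
  rw [h_frac]
  positivity

end ConePotential

/-- The truncated cone of the points `(n, k)` of `ℍ` with `2 |n| ≤ k + c`. -/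
def cone (c : ℕ) : Set (ℤ × ℤ) :=
  {z | 0 ≤ z.2 ∧ 2 * |z.1| ≤ z.2 + c}

lemma add_mem_cone {c : ℕ} {z d : ℤ × ℤ} (hz : z ∈ cone c) (hz0 : z.2 ≠ 0) (hd : d ∈ dirs) :
    z + d ∈ cone (c + 2) := by
  obtain ⟨h_height, h_width⟩ := hz
  simp only [dirs, Finset.mem_insert, Finset.mem_singleton] at hd
  rcases hd with rfl | rfl | rfl | rfl <;> constructor <;> dsimp <;> grind

lemma cone_mono : Monotone cone := fun _ _ hc _ hz =>
  ⟨hz.1, hz.2.trans (by gcongr)⟩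

section Cone

variable {B : Set (ℤ × ℤ)} {c : ℕ}

lemma lineH_subset_upperH {k : ℤ} (hk : 0 ≤ k) : lineH k ⊆ upperH := fun _ hz =>
  hk.trans_eq hz.symm

lemma hitProb_mul_conePotential_le (hB : upperH \ B ⊆ cone c) {K : ℤ} (hK : c + 3 ≤ K)
    (x : ℤ × ℤ) {z : ℤ × ℤ} (hz : z ∈ upperH \ B) :
    hitProb z (B ∪ lineH 0) x * conePotential K x ≤ conePotential K z := by
  have h_free : ∀ w ∈ cone (c + 2) \ (B ∪ lineH 0), w ∈ cone c ∧ w.2 ≠ 0 := fun w hw =>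
    ⟨hB ⟨hw.1.1, fun h => hw.2 (.inl h)⟩, fun h => hw.2 (.inr h)⟩
  refine hitProb_mul_le_of_superharmonic (U := cone (c + 2)) ?_ ?_ ?_ x
    (cone_mono (Nat.le_add_right c 2) (hB hz))
  · rintro w ⟨h_height, h_width⟩
    exact (conePotential_pos (by omega) (by push_cast at h_width; omega)).le
  · exact fun w hw d hd => add_mem_cone (h_free w hw).1 (h_free w hw).2 hd
  · rintro w ⟨⟨h_height, -⟩, -⟩
    exact stepMean_conePotential_le (by omega)

lemma exists_hitProb_le_div_sq (hB : upperH \ B ⊆ cone c) (x : ℤ × ℤ) :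
    ∃ C : ℝ, 0 ≤ C ∧ ∀ N : ℕ, ∀ z ∈ lineH N \ B,
      hitProb z (B ∪ lineH 0) x ≤ C / ((N : ℝ) + 1) ^ 2 := by
  obtain ⟨K, hKc, hKx, hKx'⟩ : ∃ K : ℤ, c + 3 ≤ K ∧ 1 < x.2 + K ∧ 2 * |x.1| ≤ x.2 + K :=
    ⟨c + 3 + 2 * |x.1| + |x.2|, by grind, by grind, by grind⟩
  have hx := conePotential_pos hKx hKx'
  refine ⟨1 / conePotential K x, by positivity, fun N z ⟨hzN, hzB⟩ => ?_⟩
  have h_height : z.2 = N := hzN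
  have hK : (1 : ℝ) ≤ K := by exact_mod_cast (by omega : 1 ≤ K)
  rw [div_right_comm, le_div_iff₀ hx]
  calc hitProb z (B ∪ lineH 0) x * conePotential K x
      ≤ conePotential K z :=
        hitProb_mul_conePotential_le hB hKc x
          ⟨lineH_subset_upperH (Int.natCast_nonneg N) hzN, hzB⟩
    _ ≤ pronicInv (z.2 + K) := conePotential_le_pronicInv (by omega)
    _ ≤ 1 / ((N : ℝ) + 1) ^ 2 := by
        rw [pronicInv, h_height, sq]
        push_cast
        gcongr
        linarith

lemma harm_le_width_mul {N w : ℕ} {x : ℤ × ℤ} {b : ℝ} (hb : 0 ≤ b)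
    (hw : ∀ z ∈ lineH N \ B, |z.1| ≤ w)
    (h_hit : ∀ z ∈ lineH N \ B, hitProb z (B ∪ lineH 0) x ≤ b) :
    harm B N x ≤ (2 * w + 1) * b := by
  refine Real.tsum_le_of_sum_le (fun z => hitProb_nonneg _ _ _) fun s => ?_
  have h_card : s.card ≤ 2 * w + 1 := by
    have h_inj : s.card ≤ (Finset.Icc (-w : ℤ) w).card :=
      Finset.card_le_card_of_injOn (fun z => z.1.1)
        (fun z _ => Finset.mem_coe.2 (Finset.mem_Icc.2 (abs_le.1 (hw z z.2))))
        fun z _ z' _ h => Subtype.ext (Prod.ext h (z.2.1.trans z'.2.1.symm))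
    rw [Int.card_Icc] at h_inj
    omega
  calc ∑ z ∈ s, hitProb z (B ∪ lineH 0) x
      ≤ s.card • b := Finset.sum_le_card_nsmul _ _ _ fun z _ => h_hit z z.2
    _ = s.card * b := nsmul_eq_mul _ _
    _ ≤ (2 * w + 1) * b := by
        gcongr
        exact_mod_cast h_card

theorem harm_Bzero_eq_zero_general {B : Set (ℤ × ℤ)} {c : ℕ} (hB : upperH \ B ⊆ cone c)
    (x : ℤ × ℤ) : Tendsto (fun N : ℕ => harm B N x) atTop (nhds 0) := by
  obtain ⟨C, hC, h_hit⟩ := exists_hitProb_le_div_sq hB x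
  have h_width : ∀ N : ℕ, ∀ z ∈ lineH N \ B, |z.1| ≤ (N + c : ℕ) := by
    rintro N z ⟨hzN, hzB⟩
    have h_cone := (hB ⟨lineH_subset_upperH (Int.natCast_nonneg N) hzN, hzB⟩).2
    have h_height : z.2 = N := hzN
    grind
  have h_harm : ∀ N : ℕ, harm B N x ≤ 2 * (c + 1) * C * (1 / ((N : ℝ) + 1)) := fun N => by
    calc harm B N x
        ≤ (2 * (N + c : ℕ) + 1) * (C / ((N : ℝ) + 1) ^ 2) :=
          harm_le_width_mul (by positivity) (h_width N) (h_hit N)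
      _ ≤ (2 * (c + 1) * (N + 1)) * (C / ((N : ℝ) + 1) ^ 2) := by
          gcongr
          push_cast
          nlinarith [mul_nonneg (Nat.cast_nonneg (α := ℝ) c) (Nat.cast_nonneg (α := ℝ) N)]
      _ = 2 * (c + 1) * C * (1 / ((N : ℝ) + 1)) := by field_simp
  refine squeeze_zero (fun N => tsum_nonneg fun z => hitProb_nonneg _ _ _) h_harm ?_
  simpa using (tendsto_one_div_add_atTop_nhds_zero_nat (𝕜 := ℝ)).const_mul (2 * (c + 1) * C)

end Cone

lemma two_mul_le_two_pow (n : ℕ) : 2 * n ≤ 2 ^ n := by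
  cases n with
  | zero => simp
  | succ n =>
    rw [pow_succ']
    gcongr
    exact Nat.lt_two_pow_self

lemma upperH_diff_Bzero_subset_cone : upperH \ Bzero ⊆ cone 0 := by
  rintro z ⟨h_height, hzB⟩
  have h_pow : (2 : ℤ) ^ z.1.natAbs < z.2 := not_le.1 fun h => hzB ⟨h_height, h⟩
  have h_lin : (2 * z.1.natAbs : ℤ) ≤ 2 ^ z.1.natAbs := mod_cast two_mul_le_two_pow z.1.natAbs
  refine ⟨h_height, ?_⟩
  rw [Int.abs_eq_natAbs, Nat.cast_zero, add_zero]
  exact h_lin.trans h_pow.le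

/-- **Counterexample 1.** Every point of `B⁰ = ∪_{n ∈ ℤ} {(n,k) : 0 ≤ k ≤ 2^{|n|}}` has
zero stationary harmonic measure: `H_{B⁰}(x) = lim_{N→∞} H_{B⁰,N}(x) = 0` for all `x ∈ B⁰`. -/
theorem harm_Bzero_eq_zero (x : ℤ × ℤ) (hx : x ∈ Bzero) :
    Tendsto (fun N : ℕ => harm Bzero N x) atTop (nhds 0) :=
  harm_Bzero_eq_zero_general upperH_diff_Bzero_subset_cone x

end SHM
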